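/- Let A and B be normal n×n complex matrices and set E = B − A. If E is normal, then tA + (1−t)B is normal for every t ∈ ℝ. If E is not normal, then for t ∈ ℝ the matrix tA + (1−t)B is normal only for t = 0 and t = 1. -/

import Mathlib

open Matrix

/-!
The normality defect `⁅star x, x⁆` is quadratic in `x`. For a self-adjoint scalar `t`, the defect of
`t • a + (1 - t) • b` is therefore the affine interpolation of the defects of `a` and `b`, minus
`t * (1 - t)` times the defect of `b - a`. When `a` and `b` are normal only the last term survives,
and it vanishes exactly when `t = 0`, `t = 1` or `b - a` is normal.
-/

theorem isStarNormal_iff_lie_star_self_eq_zero {α : Type*} [NonUnitalNonAssocRing α] [Star α]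
    {a : α} : IsStarNormal a ↔ ⁅star a, a⁆ = 0 :=
  (isStarNormal_iff a).trans commute_iff_lie_eq

theorem isStarNormal_iff_mul_star_self_eq {α : Type*} [Mul α] [Star α] {a : α} :
    IsStarNormal a ↔ a * star a = star a * a :=
  (isStarNormal_iff a).trans eq_comm

section AffineCombination

variable {R α : Type*} [CommRing R] [StarRing R] [NonUnitalNonAssocRing α] [StarRing α]
  [Module R α] [StarModule R α] [IsScalarTower R α α] [SMulCommClass R α α] {t : R}

theorem lie_star_self_affineCombination (ht : IsSelfAdjoint t) (a b : α) :
    ⁅star (t • a + (1 - t) • b), t • a + (1 - t) • b⁆ =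
      t • ⁅star a, a⁆ + (1 - t) • ⁅star b, b⁆ - (t * (1 - t)) • ⁅star (b - a), b - a⁆ := by
  have star_combination : star (t • a + (1 - t) • b) = t • star a + (1 - t) • star b := by
    rw [star_add, star_smul, star_smul, star_sub, star_one, ht.star_eq]
  rw [star_combination, star_sub]
  simp only [Ring.lie_def, add_mul, mul_add, sub_mul, mul_sub, smul_mul_assoc, mul_smul_comm]
  module

theorem stmt12_general [NoZeroDivisors R] [Module.IsTorsionFree R α] (ht : IsSelfAdjoint t)
    {a b : α} (ha : IsStarNormal a) (hb : IsStarNormal b) :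
    IsStarNormal (t • a + (1 - t) • b) ↔ IsStarNormal (b - a) ∨ t = 0 ∨ t = 1 := by
  rw [isStarNormal_iff_lie_star_self_eq_zero] at ha hb
  have defect : ⁅star (t • a + (1 - t) • b), t • a + (1 - t) • b⁆ =
      -((t * (1 - t)) • ⁅star (b - a), b - a⁆) := by
    rw [lie_star_self_affineCombination ht, ha, hb, smul_zero, smul_zero, add_zero, zero_sub]
  rw [isStarNormal_iff_lie_star_self_eq_zero, isStarNormal_iff_lie_star_self_eq_zero, defect,
    neg_eq_zero, smul_eq_zero, mul_eq_zero, sub_eq_zero, eq_comm (a := 1), or_comm]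

end AffineCombination

/-- Let `A` and `B` be normal `n × n` complex matrices and `E = B − A`.
If `E` is normal, then `tA + (1−t)B` is normal for every `t ∈ ℝ`; if `E` is not normal, then
`tA + (1−t)B` (for `t ∈ ℝ`) is normal only for `t = 0` and `t = 1`. -/
theorem stmt12 (n : ℕ) (A B : Matrix (Fin n) (Fin n) ℂ)
    (hA : A * Aᴴ = Aᴴ * A) (hB : B * Bᴴ = Bᴴ * B) :
    ((B - A) * (B - A)ᴴ = (B - A)ᴴ * (B - A) →
      ∀ t : ℝ, ((t : ℂ) • A + ((1 : ℂ) - (t : ℂ)) • B) * ((t : ℂ) • A + ((1 : ℂ) - (t : ℂ)) • B)ᴴ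
        = ((t : ℂ) • A + ((1 : ℂ) - (t : ℂ)) • B)ᴴ * ((t : ℂ) • A + ((1 : ℂ) - (t : ℂ)) • B)) ∧
    (¬ ((B - A) * (B - A)ᴴ = (B - A)ᴴ * (B - A)) →
      ∀ t : ℝ, ((t : ℂ) • A + ((1 : ℂ) - (t : ℂ)) • B) * ((t : ℂ) • A + ((1 : ℂ) - (t : ℂ)) • B)ᴴ
          = ((t : ℂ) • A + ((1 : ℂ) - (t : ℂ)) • B)ᴴ * ((t : ℂ) • A + ((1 : ℂ) - (t : ℂ)) • B) →
        t = 0 ∨ t = 1) := by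
  simp only [← star_eq_conjTranspose, ← isStarNormal_iff_mul_star_self_eq] at hA hB ⊢
  have normal_iff (t : ℝ) := stmt12_general (t := (t : ℂ)) (Complex.conj_ofReal t) hA hB
  exact ⟨fun hE t => (normal_iff t).2 (.inl hE),
    fun hE t ht => by exact_mod_cast ((normal_iff t).1 ht).resolve_left hE⟩
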